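/- For any feasible eviction strategy Q (and any run of Q), there exists an eviction graph H_Q of that run together with a coloring of its edges satisfying: (1) any two edges of the same color have the same source vertex; (2) all edges of any single color can be ordered as (i, j₁),…,(i, j_d) so that (j₁,…,j_d) forms a chain; (3) the total number of colors used is at most 3·OPT. Moreover, OBJ_Q ≤ 2·OPT + |E|, where E is the set of edges of H_Q. -/

import Mathlib

namespace Caching

attribute [local instance low] Classical.propDecidable

/-- A run of a feasible eviction strategy on the request sequence `σ` with cache size `k`
and time horizon `T`.  `C t` is the cache after processing request `t` (with `C 0 = ∅`),
and `p t` is the page evicted at time `t` (meaningful at full-cache misses). -/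
structure CacheRun (S : Type) [DecidableEq S] (k T : ℕ) (σ : ℕ → S) where
  C : ℕ → Finset S
  p : ℕ → S
  init : C 0 = ∅
  card_le : ∀ t, (C t).card ≤ k
  hit : ∀ t, 1 ≤ t → t ≤ T → (σ t ∈ C (t - 1) ∨ (C (t - 1)).card < k) →
      C t = insert (σ t) (C (t - 1))
  evict_mem : ∀ t, 1 ≤ t → t ≤ T → σ t ∉ C (t - 1) → (C (t - 1)).card = k →
      p t ∈ C (t - 1)
  evict : ∀ t, 1 ≤ t → t ≤ T → σ t ∉ C (t - 1) → (C (t - 1)).card = k →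
      C t = insert (σ t) ((C (t - 1)).erase (p t))

variable {S : Type} [DecidableEq S]

/- `nextReq σ T t` is `ν(t)`: the first time `s > t` (with `s ≤ T`) at which the page
`σ t` is requested again, and `T + 1` if there is no such time. -/
open Classical in
noncomputable def nextReq (σ : ℕ → S) (T t : ℕ) : ℕ :=
  if h : ∃ s, t < s ∧ s ≤ T ∧ σ s = σ t then Nat.find h else T + 1

/-- The total prediction loss `η = Σ_{t=1}^T |ν(t) - ω(t)|`. -/
noncomputable def totalLoss (σ : ℕ → S) (T : ℕ) (ω : ℕ → ℕ) : ℕ :=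
  ∑ t ∈ Finset.Icc 1 T, Nat.dist (nextReq σ T t) (ω t)

/-- `I_Q(t)`: indices of the last requests (up to time `t`) of the currently cached pages. -/
noncomputable def lastIdx {k T : ℕ} {σ : ℕ → S} (R : CacheRun S k T σ) (t : ℕ) : Finset ℕ :=
  (Finset.Icc 1 t).filter fun i => σ i ∈ R.C t ∧ ∀ j ∈ Finset.Icc (i + 1) t, σ j ≠ σ i

/-- Time `t` is a full-cache miss (an eviction step). -/
def EvictStep {k T : ℕ} {σ : ℕ → S} (R : CacheRun S k T σ) (t : ℕ) : Prop :=
  1 ≤ t ∧ t ≤ T ∧ σ t ∉ R.C (t - 1) ∧ (R.C (t - 1)).card = k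

/-- At time `t` the run evicts the page whose last-request index is `i`. -/
def EvictsIdx {k T : ℕ} {σ : ℕ → S} (R : CacheRun S k T σ) (t i : ℕ) : Prop :=
  EvictStep R t ∧ i ∈ lastIdx R (t - 1) ∧ R.p t = σ i

/-- `OBJ_Q`: the number of cache misses of the run. -/
noncomputable def misses {k T : ℕ} {σ : ℕ → S} (R : CacheRun S k T σ) : ℕ :=
  ((Finset.Icc 1 T).filter fun t => σ t ∉ R.C (t - 1)).card

/-- Belady's algorithm: on a full-cache miss always evict the cached page with the
largest next-request time. -/
def IsBelady {k T : ℕ} {σ : ℕ → S} (A : CacheRun S k T σ) : Prop :=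
  ∀ t, EvictStep A t → ∀ i ∈ lastIdx A (t - 1), A.p t = σ i →
    ∀ j ∈ lastIdx A (t - 1), nextReq σ T j ≤ nextReq σ T i

/-- BlindOracle: on a full-cache miss always evict the cached page with the largest
predicted next-request time. -/
def IsBlindOracle {k T : ℕ} {σ : ℕ → S} (B : CacheRun S k T σ) (ω : ℕ → ℕ) : Prop :=
  ∀ t, EvictStep B t → ∀ i ∈ lastIdx B (t - 1), B.p t = σ i →
    ∀ j ∈ lastIdx B (t - 1), ω j ≤ ω i

/-- An eviction graph of a run: a directed graph on `{1,…,T}` whose every edge `(i, j)`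
corresponds to a distinct time (`time e`) at which the run made a mistake by evicting
page `σ j` while `i` was a strictly better eviction candidate in the cache. -/
structure EvictionGraph {k T : ℕ} {σ : ℕ → S} (R : CacheRun S k T σ) where
  E : Finset (ℕ × ℕ)
  time : ℕ × ℕ → ℕ
  time_inj : ∀ e ∈ E, ∀ e' ∈ E, time e = time e' → e = e'
  mistake : ∀ e ∈ E, EvictsIdx R (time e) e.2 ∧ e.1 ∈ lastIdx R (time e - 1) ∧
      nextReq σ T e.2 < nextReq σ T e.1

/-- The eviction at time `t` triggers the eviction at time `t'`: the page evicted
at `t` is next requested at `t' = ν(i)`, which is again an eviction step. -/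
def Triggers {k T : ℕ} {σ : ℕ → S} (R : CacheRun S k T σ) (t t' : ℕ) : Prop :=
  ∃ i, EvictsIdx R t i ∧ t' = nextReq σ T i ∧ ∃ j, EvictsIdx R t' j

/-- The eviction of the page with last-request index `i` triggers the eviction of the
page with last-request index `j` (at time `ν(i)`). -/
def TriggersIdx {k T : ℕ} {σ : ℕ → S} (R : CacheRun S k T σ) (i j : ℕ) : Prop :=
  (∃ t, EvictsIdx R t i) ∧ EvictsIdx R (nextReq σ T i) j

/-- The page requested at time `t` was never requested before. -/
def NewPage (σ : ℕ → S) (t : ℕ) : Prop := ∀ s, 1 ≤ s → s < t → σ s ≠ σ t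

/-- At time `t` the evicted page has the largest prediction among cached pages. -/
def BlindChoiceAt {k T : ℕ} {σ : ℕ → S} (R : CacheRun S k T σ) (ω : ℕ → ℕ) (t : ℕ) : Prop :=
  ∀ i ∈ lastIdx R (t - 1), R.p t = σ i → ∀ j ∈ lastIdx R (t - 1), ω j ≤ ω i

/-- Corrector's choice at time `t`: if some cached page has a provably wrong prediction
(`ω i < t`), evict such a page with minimal prediction; otherwise act as BlindOracle. -/
def CorrectorChoiceAt {k T : ℕ} {σ : ℕ → S} (R : CacheRun S k T σ) (ω : ℕ → ℕ) (t : ℕ) :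
    Prop :=
  ((∃ i ∈ lastIdx R (t - 1), ω i < t) →
    ∀ i ∈ lastIdx R (t - 1), R.p t = σ i →
      ω i < t ∧ ∀ j ∈ lastIdx R (t - 1), ω j < t → ω i ≤ ω j) ∧
  ((¬ ∃ i ∈ lastIdx R (t - 1), ω i < t) → BlindChoiceAt R ω t)

/-- The page requested at time `t` was last evicted (before `t`) at a step labeled with
strategy `s₀` (0 = BlindOracle, 1 = RandomAlg, 2 = Corrector). -/
def LastEvictedWith {k T : ℕ} {σ : ℕ → S} (R : CacheRun S k T σ) (strat : ℕ → Fin 3)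
    (t : ℕ) (s₀ : Fin 3) : Prop :=
  ∃ t₀, t₀ < t ∧ EvictStep R t₀ ∧ R.p t₀ = σ t ∧ strat t₀ = s₀ ∧
    ∀ t₁, t₀ < t₁ → t₁ < t → ¬(EvictStep R t₁ ∧ R.p t₁ = σ t)

/-- A run of the AlternatingOracle strategy (for a fixed realization of its random
choices), together with the labeling `strat` of which of the three strategies was used
at each eviction step: on a miss for a never-requested page use BlindOracle; if the
requested page was last evicted by BlindOracle use RandomAlg (an arbitrary cached page);
if by RandomAlg use Corrector; if by Corrector use BlindOracle. -/
def IsAlternatingOracle {k T : ℕ} {σ : ℕ → S} (R : CacheRun S k T σ) (ω : ℕ → ℕ)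
    (strat : ℕ → Fin 3) : Prop :=
  ∀ t, EvictStep R t →
    (NewPage σ t → strat t = 0 ∧ BlindChoiceAt R ω t) ∧
    (LastEvictedWith R strat t 0 → strat t = 1) ∧
    (LastEvictedWith R strat t 1 → strat t = 2 ∧ CorrectorChoiceAt R ω t) ∧
    (LastEvictedWith R strat t 2 → strat t = 0 ∧ BlindChoiceAt R ω t)

/-- AlternatingOracle driven by a seed `u` of uniform random values: at each eviction
step performed by RandomAlg at time `t`, the evicted page is the one whose last-request
index has rank `u t` among the `k` cached indices, so that for a uniformly random seed
the evicted page is uniform over the cache. -/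
def IsAlternatingOracleSeeded {k T : ℕ} {σ : ℕ → S} (R : CacheRun S k T σ) (ω : ℕ → ℕ)
    (strat : ℕ → Fin 3) (u : Fin (T + 1) → Fin k) : Prop :=
  IsAlternatingOracle R ω strat ∧
  ∀ t (h : EvictStep R t), strat t = 1 →
    ∀ i ∈ lastIdx R (t - 1), R.p t = σ i →
      ((lastIdx R (t - 1)).filter fun j => j < i).card =
        ((u ⟨t, Nat.lt_succ_of_le h.2.1⟩ : Fin k) : ℕ)

/-- The family of runs is adapted to the seeds: the behavior up to time `t` depends only
on the seed values with index at most `t` (the strategy is online). -/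
def Adapted {k T : ℕ} {σ : ℕ → S} (R : (Fin (T + 1) → Fin k) → CacheRun S k T σ)
    (strat : (Fin (T + 1) → Fin k) → ℕ → Fin 3) : Prop :=
  ∀ u u' t, (∀ s : Fin (T + 1), (s : ℕ) ≤ t → u s = u' s) →
    (R u).C t = (R u').C t ∧ (R u).p t = (R u').p t ∧ strat u t = strat u' t

/-- The probability of the outcome `x` for `T` i.i.d. Bernoulli(γ) random bits. -/
noncomputable def bernWeight (γ : ℝ) {T : ℕ} (x : Fin T → Bool) : ℝ :=
  ∏ i, if x i then γ else 1 - γ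

/-- `S(x, m)`: the number of ones among the first `m` coordinates of `x`. -/
noncomputable def scount {T : ℕ} (x : Fin T → Bool) (m : ℕ) : ℕ :=
  (Finset.univ.filter fun i : Fin T => (i : ℕ) < m ∧ x i).card

/-!
Compare the run `R` with any other run `A` on the same requests. Once the caches are full, every
request replaces one index `x` of `lastIdx A` and one index `j` of `lastIdx R` by the current
time. We maintain a permutation `μ` mapping `lastIdx A` onto `lastIdx R` and fixing the common
indices: if `μ y = j`, then `y` is rematched to `μ x`, that is, `μ` becomes `μ * swap x y`. A
matched pair `(y, μ y)` weighs `0` if `y = μ y`, `2` if `y` is requested before `μ y`, and `1`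
otherwise.

If `A` hits and `R` misses, then `A` replaces the requested page `x`, whose pair weighs `2`.
Either `y ≠ j`, and two pairs merge into one, which frees a unit of weight to pay for the miss; or
`y = j`, and then the new pair `(j, μ x)` weighs only `1` or the eviction of `j` was a mistake,
witnessed by `μ x`, and the miss is paid by the new edge `(μ x, j)`. A miss of `A` pays `2` units.
As the eviction of `x` triggers that of `j`, the edge `(μ x, j)` continues the chain of the edge
`(μ x, x)` when this edge is present. Hence colors are bounded with the same weights, a pair
`(y, z)` whose edge `(z, y)` is already present being charged one unit less.
-/

section Indices

variable {k T t i j : ℕ} {σ : ℕ → S} {R A : CacheRun S k T σ}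

lemma mem_lastIdx :
    i ∈ lastIdx R t ↔ 1 ≤ i ∧ i ≤ t ∧ σ i ∈ R.C t ∧ ∀ j, i < j → j ≤ t → σ j ≠ σ i := by
  simp only [lastIdx, Finset.mem_filter, Finset.mem_Icc, Nat.succ_le_iff, and_imp, and_assoc]

lemma lastIdx_congr (h : R.C t = A.C t) : lastIdx R t = lastIdx A t := by
  rw [lastIdx, lastIdx, h]

lemma eq_of_mem_lastIdx (hi : i ∈ lastIdx R t) (hj : j ∈ lastIdx A t) (h : σ i = σ j) :
    i = j := by
  obtain ⟨-, hit, -, hi_last⟩ := mem_lastIdx.1 hi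
  obtain ⟨-, hjt, -, hj_last⟩ := mem_lastIdx.1 hj
  rcases lt_trichotomy i j with hij | hij | hij
  · exact absurd h.symm (hi_last j hij hjt)
  · exact hij
  · exact absurd h (hj_last i hij hit)

lemma lt_nextReq (ht : t < T) (hi : i ∈ lastIdx R t) : t < nextReq σ T i := by
  obtain ⟨-, -, -, hlast⟩ := mem_lastIdx.1 hi
  rw [nextReq]
  split_ifs with h
  · obtain ⟨hlt, -, heq⟩ := Nat.find_spec h
    by_contra! hle
    exact hlast _ hlt hle heq
  · omega

lemma nextReq_eq_succ_iff (ht : t < T) (hi : i ∈ lastIdx R t) :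
    nextReq σ T i = t + 1 ↔ σ (t + 1) = σ i := by
  have hlt := lt_nextReq ht hi
  have hit := (mem_lastIdx.1 hi).2.1
  rw [nextReq] at hlt ⊢
  split_ifs at hlt ⊢ with h
  · constructor
    · intro heq
      exact heq ▸ (Nat.find_spec h).2.2
    · intro heq
      have := Nat.find_min' h ⟨by omega, by omega, heq⟩
      omega
  · exact ⟨fun _ => by omega, fun heq => absurd ⟨t + 1, by omega, by omega, heq⟩ h⟩

lemma eq_of_nextReq_eq_succ (ht : t < T) (hi : i ∈ lastIdx R t) (hj : j ∈ lastIdx A t)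
    (hi' : nextReq σ T i = t + 1) (hj' : nextReq σ T j = t + 1) : i = j :=
  eq_of_mem_lastIdx hi hj <|
    ((nextReq_eq_succ_iff ht hi).1 hi').symm.trans ((nextReq_eq_succ_iff ht hj).1 hj')

lemma succ_lt_nextReq_of_notMem (ht : t < T) (hi : i ∈ lastIdx R t) (hmiss : σ (t + 1) ∉ R.C t) :
    t + 1 < nextReq σ T i := by
  refine lt_of_le_of_ne (lt_nextReq ht hi) fun h => hmiss ?_
  rw [(nextReq_eq_succ_iff ht hi).1 h.symm]
  exact (mem_lastIdx.1 hi).2.2.1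

end Indices

section Dynamics

variable {k T t : ℕ} {σ : ℕ → S} {R : CacheRun S k T σ}

lemma CacheRun.C_succ_of_insert (ht : t < T) (h : σ (t + 1) ∈ R.C t ∨ (R.C t).card < k) :
    R.C (t + 1) = insert (σ (t + 1)) (R.C t) :=
  R.hit (t + 1) (by omega) ht h

lemma CacheRun.evictStep_succ (ht : t < T) (hmiss : σ (t + 1) ∉ R.C t) (hfull : (R.C t).card = k) :
    EvictStep R (t + 1) :=
  ⟨by omega, ht, hmiss, hfull⟩

lemma EvictStep.p_mem (h : EvictStep R t) : R.p t ∈ R.C (t - 1) :=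
  R.evict_mem t h.1 h.2.1 h.2.2.1 h.2.2.2

lemma EvictStep.C_eq (h : EvictStep R t) : R.C t = insert (σ t) ((R.C (t - 1)).erase (R.p t)) :=
  R.evict t h.1 h.2.1 h.2.2.1 h.2.2.2

lemma CacheRun.insert_or_evictStep (R : CacheRun S k T σ) (ht : t < T) :
    (σ (t + 1) ∈ R.C t ∨ (R.C t).card < k) ∨ EvictStep R (t + 1) := by
  by_cases h : σ (t + 1) ∈ R.C t ∨ (R.C t).card < k
  · exact Or.inl h
  · push Not at h
    exact Or.inr (R.evictStep_succ ht h.1 ((R.card_le t).antisymm h.2))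

lemma CacheRun.C_succ_subset (ht : t < T) : R.C (t + 1) ⊆ insert (σ (t + 1)) (R.C t) := by
  rcases R.insert_or_evictStep ht with h | h
  · rw [C_succ_of_insert ht h]
  · rw [h.C_eq]
    exact Finset.insert_subset_insert _ (Finset.erase_subset _ _)

lemma CacheRun.card_C_le_succ (ht : t < T) : (R.C t).card ≤ (R.C (t + 1)).card := by
  rcases R.insert_or_evictStep ht with h | h
  · rw [C_succ_of_insert ht h]
    exact Finset.card_le_card (Finset.subset_insert _ _)
  · have hmiss : σ (t + 1) ∉ (R.C t).erase (R.p (t + 1)) := fun hmem =>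
      h.2.2.1 (Finset.mem_of_mem_erase hmem)
    have hcard : ((R.C t).erase (R.p (t + 1))).card + 1 = (R.C t).card :=
      Finset.card_erase_add_one h.p_mem
    rw [h.C_eq]
    exact (Finset.card_insert_of_notMem hmiss).trans hcard |>.ge

lemma CacheRun.card_C_succ_of_full (ht : t < T) (h : (R.C t).card = k) :
    (R.C (t + 1)).card = k :=
  (R.card_le _).antisymm (h.symm.trans_le (card_C_le_succ ht))

lemma CacheRun.C_eq_or_full (R A : CacheRun S k T σ) (ht : t ≤ T) :
    R.C t = A.C t ∨ ((R.C t).card = k ∧ (A.C t).card = k) := by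
  induction t with
  | zero => exact Or.inl (by rw [R.init, A.init])
  | succ t ih =>
    rcases ih (by omega) with heq | ⟨hR, hA⟩
    · rcases (R.card_le t).lt_or_eq with hlt | hfull
      · left
        rw [C_succ_of_insert ht (Or.inr hlt), C_succ_of_insert ht (Or.inr (heq ▸ hlt)), heq]
      · exact Or.inr ⟨card_C_succ_of_full ht hfull, card_C_succ_of_full ht (heq ▸ hfull)⟩
    · exact Or.inr ⟨card_C_succ_of_full ht hR, card_C_succ_of_full ht hA⟩

lemma CacheRun.request_mem_C_succ (ht : t < T) : σ (t + 1) ∈ R.C (t + 1) := by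
  rcases R.insert_or_evictStep ht with h | h
  · rw [C_succ_of_insert ht h]
    exact Finset.mem_insert_self _ _
  · rw [h.C_eq]
    exact Finset.mem_insert_self _ _

lemma succ_mem_lastIdx (ht : t < T) : t + 1 ∈ lastIdx R (t + 1) :=
  mem_lastIdx.2 ⟨by omega, le_rfl, CacheRun.request_mem_C_succ ht, fun _ _ _ => by omega⟩

lemma mem_lastIdx_succ_iff (ht : t < T) {i : ℕ} (hi : i ≤ t) :
    i ∈ lastIdx R (t + 1) ↔
      i ∈ lastIdx R t ∧ σ i ∈ R.C (t + 1) ∧ σ (t + 1) ≠ σ i := by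
  simp only [mem_lastIdx]
  constructor
  · rintro ⟨hi₁, -, hmem, hlast⟩
    have hne := hlast (t + 1) (by omega) le_rfl
    have hmem' := Finset.mem_insert.1 (CacheRun.C_succ_subset ht hmem)
    exact ⟨⟨hi₁, hi, hmem'.resolve_left hne.symm, fun j hij hjt => hlast j hij (by omega)⟩,
      hmem, hne⟩
  · rintro ⟨⟨hi₁, -, -, hlast⟩, hmem, hne⟩
    refine ⟨hi₁, by omega, hmem, fun j hij hjt => ?_⟩
    rcases Nat.le_succ_iff.1 hjt with hjt | rfl
    · exact hlast j hij hjt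
    · exact hne

lemma exists_mem_lastIdx (ht : t ≤ T) {y : S} (hy : y ∈ R.C t) : ∃ i ∈ lastIdx R t, σ i = y := by
  induction t with
  | zero => simp [R.init] at hy
  | succ t ih =>
    by_cases hreq : y = σ (t + 1)
    · exact ⟨t + 1, succ_mem_lastIdx ht, hreq.symm⟩
    · have hy' := (Finset.mem_insert.1 (CacheRun.C_succ_subset ht hy)).resolve_left hreq
      obtain ⟨i, hi, rfl⟩ := ih (by omega) hy'
      have hit := (mem_lastIdx.1 hi).2.1
      exact ⟨i, (mem_lastIdx_succ_iff ht hit).2 ⟨hi, hy, Ne.symm hreq⟩, rfl⟩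

lemma lastIdx_succ_of_erase (ht : t < T) {e : ℕ} (he : e ∈ lastIdx R t)
    (hC : R.C (t + 1) = insert (σ (t + 1)) ((R.C t).erase (σ e)))
    (hhit : σ (t + 1) ∈ R.C t → σ (t + 1) = σ e) :
    lastIdx R (t + 1) = insert (t + 1) ((lastIdx R t).erase e) := by
  ext i
  rw [Finset.mem_insert, Finset.mem_erase]
  rcases lt_trichotomy i (t + 1) with hi | rfl | hi
  · rw [mem_lastIdx_succ_iff ht (by omega), hC, Finset.mem_insert, Finset.mem_erase]
    constructor
    · rintro ⟨hmem, hcache, hne⟩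
      exact Or.inr ⟨fun hie => (hcache.resolve_left hne.symm).1 (congrArg σ hie), hmem⟩
    · rintro (rfl | ⟨hne, hmem⟩)
      · omega
      · have hσ : σ i ≠ σ e := fun h => hne (eq_of_mem_lastIdx hmem he h)
        have hcache := (mem_lastIdx.1 hmem).2.2.1
        exact ⟨hmem, Or.inr ⟨hσ, hcache⟩, fun h => hσ (h ▸ hhit (h ▸ hcache))⟩
  · simpa using succ_mem_lastIdx ht
  · simp only [mem_lastIdx]
    omega

/-- On the request at time `t + 1` the index `j` leaves `lastIdx R`: on a hit because its page is
requested again, on a miss because its page is evicted. -/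
structure Replaces (R : CacheRun S k T σ) (t j : ℕ) : Prop where
  mem : j ∈ lastIdx R t
  lastIdx_succ : lastIdx R (t + 1) = insert (t + 1) ((lastIdx R t).erase j)
  nextReq_eq : σ (t + 1) ∈ R.C t → nextReq σ T j = t + 1
  evicts : σ (t + 1) ∉ R.C t → EvictsIdx R (t + 1) j

lemma exists_replaces (ht : t < T) (h : σ (t + 1) ∈ R.C t ∨ (R.C t).card = k) :
    ∃ j, Replaces R t j := by
  by_cases hmem : σ (t + 1) ∈ R.C t
  · obtain ⟨j, hj, hσ⟩ := exists_mem_lastIdx ht.le hmem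
    have hC : R.C (t + 1) = insert (σ (t + 1)) ((R.C t).erase (σ j)) := by
      rw [CacheRun.C_succ_of_insert ht (Or.inl hmem), hσ, Finset.insert_erase hmem,
        Finset.insert_eq_of_mem hmem]
    exact ⟨j, hj, lastIdx_succ_of_erase ht hj hC fun _ => hσ.symm,
      fun _ => (nextReq_eq_succ_iff ht hj).2 hσ.symm, absurd hmem⟩
  · have hstep := R.evictStep_succ ht hmem (h.resolve_left hmem)
    obtain ⟨j, hj, hσ⟩ := exists_mem_lastIdx ht.le hstep.p_mem
    exact ⟨j, hj, lastIdx_succ_of_erase ht hj (hσ ▸ hstep.C_eq) fun hhit => absurd hhit hmem,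
      fun hhit => absurd hhit hmem, fun _ => ⟨hstep, hj, hσ.symm⟩⟩

lemma C_eq_or_replaces (R A : CacheRun S k T σ) (ht : t < T) :
    (R.C t = A.C t ∧ R.C (t + 1) = A.C (t + 1)) ∨
      ((∃ j, Replaces R t j) ∧ ∃ x, Replaces A t x) := by
  rcases R.C_eq_or_full A ht.le with heq | ⟨hR, hA⟩
  · by_cases h : σ (t + 1) ∈ R.C t ∨ (R.C t).card = k
    · exact Or.inr ⟨exists_replaces ht h, exists_replaces ht (heq ▸ h)⟩
    · push Not at h
      have hlt := (R.card_le t).lt_of_ne h.2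
      refine Or.inl ⟨heq, ?_⟩
      rw [CacheRun.C_succ_of_insert ht (Or.inr hlt),
        CacheRun.C_succ_of_insert ht (Or.inr (heq ▸ hlt)), heq]
  · exact Or.inr ⟨exists_replaces ht (Or.inr hR), exists_replaces ht (Or.inr hA)⟩

lemma mem_lastIdx_of_le {s j : ℕ} (hjs : j ≤ s) (hst : s ≤ t) (ht : t ≤ T)
    (hj : j ∈ lastIdx R t) : j ∈ lastIdx R s := by
  induction t, hst using Nat.le_induction with
  | base => exact hj
  | succ t hst ih => exact ih (by omega) ((mem_lastIdx_succ_iff ht (by omega)).1 hj).1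

lemma EvictsIdx.notMem_lastIdx {s j : ℕ} (h : EvictsIdx R s j) : j ∉ lastIdx R s := by
  obtain ⟨hstep, hj, hp⟩ := h
  intro hmem
  have hcache := (mem_lastIdx.1 hmem).2.2.1
  rw [hstep.C_eq, hp, Finset.mem_insert, Finset.mem_erase] at hcache
  have hreq : σ j = σ s := hcache.resolve_right fun h => h.1 rfl
  exact hstep.2.2.1 (hreq ▸ (mem_lastIdx.1 hj).2.2.1)

lemma EvictsIdx.le_of_evictsIdx {s j : ℕ} (hs : EvictsIdx R s j) (ht : EvictsIdx R t j) :
    t ≤ s := by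
  by_contra! hst
  have htT := ht.1.2.1
  have hjs := (mem_lastIdx.1 hs.2.1).2.1
  exact hs.notMem_lastIdx (mem_lastIdx_of_le (by omega) (by omega) (by omega) ht.2.1)

lemma EvictsIdx.time_unique {s j : ℕ} (hs : EvictsIdx R s j) (ht : EvictsIdx R t j) : s = t :=
  (ht.le_of_evictsIdx hs).antisymm (hs.le_of_evictsIdx ht)

end Dynamics

section Misses

variable {k T : ℕ} {σ : ℕ → S}

/-- The number of cache misses of `R` up to time `t`. -/
noncomputable def missesUpTo (R : CacheRun S k T σ) (t : ℕ) : ℕ :=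
  ((Finset.Icc 1 t).filter fun s => σ s ∉ R.C (s - 1)).card

lemma missesUpTo_succ (R : CacheRun S k T σ) (t : ℕ) :
    missesUpTo R (t + 1) = missesUpTo R t + if σ (t + 1) ∈ R.C t then 0 else 1 := by
  rw [missesUpTo, ← Finset.insert_Icc_right_eq_Icc_add_one (by omega), Finset.filter_insert]
  by_cases h : σ (t + 1) ∈ R.C t <;> simp [h, missesUpTo]

end Misses

section Matching

variable {α : Type*} {I J : Finset α} {μ : Equiv.Perm α}

/-- `μ` restricts to a bijection from `I` onto `J` that is the identity on `I ∩ J`. It is encoded as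
a permutation of the whole type so that rematching is multiplication by a transposition. -/
structure IsMatching (I J : Finset α) (μ : Equiv.Perm α) : Prop where
  apply_mem_iff : ∀ i, μ i ∈ J ↔ i ∈ I
  apply_eq : ∀ i ∈ I, i ∈ J → μ i = i

lemma IsMatching.one : IsMatching I I 1 :=
  ⟨fun _ => Iff.rfl, fun _ _ _ => rfl⟩

lemma IsMatching.symm_mem (h : IsMatching I J μ) {j : α} (hj : j ∈ J) : μ.symm j ∈ I := by
  rwa [← h.apply_mem_iff, Equiv.apply_symm_apply]

variable [DecidableEq α]

protected lemma IsMatching.insert (h : IsMatching I J μ) {a : α} (ha : μ a = a) :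
    IsMatching (insert a I) (insert a J) μ where
  apply_mem_iff i := by
    have hμ : μ i = a ↔ i = a := by rw [← μ.injective.eq_iff (a := i) (b := a), ha]
    rw [Finset.mem_insert, Finset.mem_insert, hμ, h.apply_mem_iff]
  apply_eq i hI hJ := by
    rcases eq_or_ne i a with rfl | hne
    · exact ha
    · exact h.apply_eq i (Finset.mem_of_mem_insert_of_ne hI hne)
        (Finset.mem_of_mem_insert_of_ne hJ hne)

protected lemma IsMatching.erase (h : IsMatching I J μ) {x j : α} (hx : x ∈ I) (hj : j ∈ J) :
    IsMatching (I.erase x) (J.erase j) (μ * Equiv.swap x (μ.symm j)) where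
  apply_mem_iff i := by
    have hy := h.symm_mem hj
    rw [Finset.mem_erase, Finset.mem_erase, Equiv.Perm.mul_apply, h.apply_mem_iff, ne_eq, ne_eq,
      ← Equiv.eq_symm_apply, Equiv.swap_apply_eq_iff, Equiv.swap_apply_right]
    rcases eq_or_ne i x with rfl | hix
    · simp
    rcases eq_or_ne i (μ.symm j) with rfl | hiy
    · simp [hx, hy]
    · rw [Equiv.swap_apply_of_ne_of_ne hix hiy]
  apply_eq i hI hJ := by
    rw [Finset.mem_erase] at hI hJ
    have hμ := h.apply_eq i hI.2 hJ.2
    have hiy : i ≠ μ.symm j := fun hi => hJ.1 (by rw [← hμ, hi, Equiv.apply_symm_apply])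
    rw [Equiv.Perm.mul_apply, Equiv.swap_apply_of_ne_of_ne hI.1 hiy, hμ]

lemma sum_erase_mul_swap {M : Type*} [AddCommMonoid M] (w : α → α → M) (μ : Equiv.Perm α)
    {x y : α} (hx : x ∈ I) (hy : y ∈ I) :
    ∑ i ∈ I.erase x, w i ((μ * Equiv.swap x y) i) + (w x (μ x) + w y (μ y)) =
      ∑ i ∈ I, w i (μ i) + w y (μ x) := by
  rcases eq_or_ne y x with rfl | hyx
  · rw [Equiv.swap_self, ← Finset.sum_erase_add _ _ hx, ← add_assoc]
    rfl
  · have hy' : y ∈ I.erase x := Finset.mem_erase.2 ⟨hyx, hy⟩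
    have hrest : ∑ i ∈ (I.erase x).erase y, w i ((μ * Equiv.swap x y) i) =
        ∑ i ∈ (I.erase x).erase y, w i (μ i) := by
      refine Finset.sum_congr rfl fun i hi => ?_
      obtain ⟨hiy, hix, -⟩ := by simpa only [Finset.mem_erase] using hi
      rw [Equiv.Perm.mul_apply, Equiv.swap_apply_of_ne_of_ne hix hiy]
    rw [← Finset.sum_erase_add _ _ hx, ← Finset.sum_erase_add _ _ hy',
      ← Finset.sum_erase_add (I.erase x) _ hy', hrest, Equiv.Perm.mul_apply,
      Equiv.swap_apply_right]
    abel

end Matching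

section Weight

variable {T i j y z : ℕ} {σ : ℕ → S} {E : Finset (ℕ × ℕ)}

/-- The weight of the matched pair `(y, z)`, given the set `E` of edges already in the graph: a
credit that pays for later misses or edges when pairs are merged. -/
noncomputable def weight (σ : ℕ → S) (T : ℕ) (E : Finset (ℕ × ℕ)) (y z : ℕ) : ℕ :=
  if y = z then 0 else if nextReq σ T y < nextReq σ T z ∧ (z, y) ∉ E then 2 else 1

lemma weight_self : weight σ T E y y = 0 :=
  if_pos rfl

lemma weight_le_two : weight σ T E y z ≤ 2 := by
  unfold weight
  split_ifs <;> omega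

lemma one_le_weight (h : y ≠ z) : 1 ≤ weight σ T E y z := by
  unfold weight
  split_ifs <;> omega

lemma weight_le_one (h : nextReq σ T z ≤ nextReq σ T y) : weight σ T E y z ≤ 1 := by
  unfold weight
  split_ifs <;> omega

lemma weight_eq_two (h : nextReq σ T y < nextReq σ T z) (hE : (z, y) ∉ E) :
    weight σ T E y z = 2 := by
  have hne : y ≠ z := fun hyz => h.ne (congrArg _ hyz)
  rw [weight, if_neg hne, if_pos ⟨h, hE⟩]

lemma weight_insert_self (h : y ≠ z) : weight σ T (insert (z, y) E) y z = 1 := by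
  simp [weight, h]

lemma weight_insert_of_ne (h : y ≠ j) : weight σ T (insert (i, j) E) y z = weight σ T E y z := by
  simp [weight, h]

/-- The total weight of the pairs `(y, μ y)` with `y ∈ I`, given the set `E` of edges. -/
noncomputable def totalWeight (σ : ℕ → S) (T : ℕ) (E : Finset (ℕ × ℕ)) (I : Finset ℕ)
    (μ : Equiv.Perm ℕ) : ℕ :=
  ∑ y ∈ I, weight σ T E y (μ y)

lemma totalWeight_one (I : Finset ℕ) : totalWeight σ T E I 1 = 0 :=
  Finset.sum_eq_zero fun _ _ => weight_self

lemma totalWeight_insert_edge {I : Finset ℕ} {μ : Equiv.Perm ℕ} (hj : j ∈ I)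
    (hlt : nextReq σ T j < nextReq σ T (μ j)) (hE : (μ j, j) ∉ E) :
    totalWeight σ T (insert (μ j, j) E) I μ + 1 = totalWeight σ T E I μ := by
  have hne : j ≠ μ j := fun h => hlt.ne (congrArg _ h)
  have hrest : ∑ y ∈ I.erase j, weight σ T (insert (μ j, j) E) y (μ y) =
      ∑ y ∈ I.erase j, weight σ T E y (μ y) :=
    Finset.sum_congr rfl fun y hy => weight_insert_of_ne (Finset.ne_of_mem_erase hy)
  rw [totalWeight, totalWeight, ← Finset.sum_erase_add _ _ hj, hrest, weight_insert_self hne,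
    ← Finset.sum_erase_add _ _ hj, weight_eq_two hlt hE]

lemma totalWeight_insert_erase {a x : ℕ} {I : Finset ℕ} {μ : Equiv.Perm ℕ} (hx : x ∈ I)
    (hj : μ.symm j ∈ I) (ha : (μ * Equiv.swap x (μ.symm j)) a = a) :
    totalWeight σ T E (insert a (I.erase x)) (μ * Equiv.swap x (μ.symm j)) +
        (weight σ T E x (μ x) + weight σ T E (μ.symm j) j) =
      totalWeight σ T E I μ + weight σ T E (μ.symm j) (μ x) := by
  have hsum := sum_erase_mul_swap (weight σ T E) μ hx hj
  rw [Equiv.apply_symm_apply] at hsum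
  rw [totalWeight, Finset.sum_insert_of_eq_zero_if_notMem fun _ => ha.symm ▸ weight_self]
  exact hsum

end Weight

section Coloring

variable {k T : ℕ} {σ : ℕ → S} {R : CacheRun S k T σ}

/-- The edges of `F` can be ordered as `(a, b 0), …, (a, b (d - 1))` such that
`(b 0, …, b (d - 1))` is a chain. -/
def IsChainClass (R : CacheRun S k T σ) (F : Finset (ℕ × ℕ)) : Prop :=
  ∃ (d a : ℕ) (b : ℕ → ℕ), F = (Finset.range d).image (fun x => (a, b x)) ∧
    (∀ x < d, ∀ x' < d, b x = b x' → x = x') ∧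
    ∀ x, x + 1 < d → TriggersIdx R (b x) (b (x + 1))

lemma IsChainClass.empty : IsChainClass R ∅ :=
  ⟨0, 0, id, by simp, by simp, by simp⟩

lemma IsChainClass.singleton (e : ℕ × ℕ) : IsChainClass R {e} :=
  ⟨1, e.1, fun _ => e.2, by simp, by simp, by simp⟩

lemma IsChainClass.fst_eq {F : Finset (ℕ × ℕ)} (h : IsChainClass R F) {e e' : ℕ × ℕ} (he : e ∈ F)
    (he' : e' ∈ F) : e.1 = e'.1 := by
  obtain ⟨d, a, b, rfl, -, -⟩ := h
  obtain ⟨x, -, rfl⟩ := Finset.mem_image.1 he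
  obtain ⟨x', -, rfl⟩ := Finset.mem_image.1 he'
  rfl

lemma IsChainClass.insert {F : Finset (ℕ × ℕ)} (h : IsChainClass R F) {i x j : ℕ}
    (hx : (i, x) ∈ F) (htrig : TriggersIdx R x j) (hfresh : ∀ e ∈ F, e.2 ≠ j)
    (hlast : ∀ e ∈ F, ¬ TriggersIdx R x e.2) : IsChainClass R (insert (i, j) F) := by
  obtain ⟨d, a, b, rfl, hinj, hchain⟩ := h
  have hmem : ∀ m < d, (a, b m) ∈ (Finset.range d).image (fun m => (a, b m)) := fun m hm =>
    Finset.mem_image_of_mem _ (Finset.mem_range.2 hm)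
  obtain ⟨l, hl, heq⟩ := Finset.mem_image.1 hx
  obtain ⟨rfl, rfl⟩ := Prod.mk.inj heq
  rw [Finset.mem_range] at hl
  have hld : l + 1 = d := by
    by_contra hne
    exact hlast _ (hmem (l + 1) (by omega)) (hchain l (by omega))
  have hold : ∀ m < d, Function.update b d j m = b m := fun m hm =>
    Function.update_of_ne hm.ne _ _
  refine ⟨d + 1, a, Function.update b d j, ?_, fun m hm m' hm' hb => ?_, fun m hm => ?_⟩
  · rw [Finset.range_add_one, Finset.image_insert, Function.update_self]
    exact congrArg _ (Finset.image_congr fun m hm => by rw [hold m (Finset.mem_range.1 hm)])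
  · rcases Nat.lt_succ_iff_lt_or_eq.1 hm with hm | rfl <;>
      rcases Nat.lt_succ_iff_lt_or_eq.1 hm' with hm' | rfl
    · exact hinj m hm m' hm' (by rwa [hold m hm, hold m' hm'] at hb)
    · rw [hold m hm, Function.update_self] at hb
      exact absurd hb (hfresh _ (hmem m hm))
    · rw [hold m' hm', Function.update_self] at hb
      exact absurd hb.symm (hfresh _ (hmem m' hm'))
    · rfl
  · rw [hold m (by omega)]
    rcases Nat.lt_succ_iff_lt_or_eq.1 hm with hm | hm
    · rw [hold _ hm]
      exact hchain m hm
    · rw [hm, Function.update_self]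
      obtain rfl : m = l := by omega
      exact htrig

/-- `col` colors the edges in `E` with colors less than `n` such that every color class is a
chain. -/
structure IsChainColoring (R : CacheRun S k T σ) (E : Finset (ℕ × ℕ)) (col : ℕ × ℕ → ℕ)
    (n : ℕ) : Prop where
  lt : ∀ e ∈ E, col e < n
  chain : ∀ c, IsChainClass R (E.filter fun e => col e = c)

variable {E : Finset (ℕ × ℕ)} {col : ℕ × ℕ → ℕ} {n : ℕ} {e : ℕ × ℕ}

lemma IsChainColoring.empty : IsChainColoring R ∅ col n :=
  ⟨by simp, fun _ => IsChainClass.empty⟩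

lemma IsChainColoring.fst_eq (h : IsChainColoring R E col n) :
    ∀ e ∈ E, ∀ e' ∈ E, col e = col e' → e.1 = e'.1 := fun _ he e' he' hcol =>
  (h.chain (col e')).fst_eq (Finset.mem_filter.2 ⟨he, hcol⟩) (Finset.mem_filter.2 ⟨he', rfl⟩)

lemma filter_insert_update (he : e ∉ E) (c c' : ℕ) :
    (insert e E).filter (fun f => Function.update col e c f = c') =
      if c = c' then insert e (E.filter fun f => col f = c') else E.filter fun f => col f = c' := by
  have hE : E.filter (fun f => Function.update col e c f = c') = E.filter fun f => col f = c' :=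
    Finset.filter_congr fun f hf => by
      rw [Function.update_of_ne (ne_of_mem_of_not_mem hf he)]
  rw [Finset.filter_insert, Function.update_self, hE]

protected lemma IsChainColoring.insert (h : IsChainColoring R E col n) (he : e ∉ E) {c m : ℕ}
    (hc : c < m) (hnm : n ≤ m) (hclass : IsChainClass R (insert e (E.filter fun f => col f = c))) :
    IsChainColoring R (insert e E) (Function.update col e c) m where
  lt f hf := by
    rcases Finset.mem_insert.1 hf with rfl | hf
    · rwa [Function.update_self]
    · rw [Function.update_of_ne (ne_of_mem_of_not_mem hf he)]
      exact (h.lt f hf).trans_le hnm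
  chain c' := by
    rw [filter_insert_update he]
    split_ifs with hcc
    · exact hcc ▸ hclass
    · exact h.chain c'

lemma IsChainColoring.insert_newColor (h : IsChainColoring R E col n) (he : e ∉ E) :
    IsChainColoring R (insert e E) (Function.update col e n) (n + 1) := by
  refine h.insert he n.lt_succ_self n.le_succ ?_
  rw [Finset.filter_false_of_mem fun f hf => (h.lt f hf).ne, Finset.insert_empty]
  exact IsChainClass.singleton e

end Coloring

section Graph

variable {k T t i j : ℕ} {σ : ℕ → S} {R : CacheRun S k T σ} {H : EvictionGraph R}

namespace EvictionGraph

/-- The eviction graph without edges. -/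
def empty (R : CacheRun S k T σ) : EvictionGraph R where
  E := ∅
  time _ := 0
  time_inj := by simp
  mistake := by simp

/-- Add to `H` the edge `(i, j)` for a mistake made at a time `t` later than those of all edges. -/
def insertEdge (H : EvictionGraph R) (htime : ∀ e ∈ H.E, H.time e < t) (hj : EvictsIdx R t j)
    (hi : i ∈ lastIdx R (t - 1)) (hlt : nextReq σ T j < nextReq σ T i) : EvictionGraph R where
  E := insert (i, j) H.E
  time := Function.update H.time (i, j) t
  time_inj e he e' he' heq := by
    by_cases h : e = (i, j) <;> by_cases h' : e' = (i, j)
    · rw [h, h']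
    · rw [h, Function.update_self, Function.update_of_ne h'] at heq
      exact absurd heq.symm (htime e' (Finset.mem_of_mem_insert_of_ne he' h')).ne
    · rw [h', Function.update_self, Function.update_of_ne h] at heq
      exact absurd heq (htime e (Finset.mem_of_mem_insert_of_ne he h)).ne
    · rw [Function.update_of_ne h, Function.update_of_ne h'] at heq
      exact H.time_inj e (Finset.mem_of_mem_insert_of_ne he h) e'
        (Finset.mem_of_mem_insert_of_ne he' h') heq
  mistake e he := by
    by_cases h : e = (i, j)
    · rw [h, Function.update_self]
      exact ⟨hj, hi, hlt⟩
    · rw [Function.update_of_ne h]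
      exact H.mistake e (Finset.mem_of_mem_insert_of_ne he h)

lemma insertEdge_E (htime : ∀ e ∈ H.E, H.time e < t) (hj : EvictsIdx R t j)
    (hi : i ∈ lastIdx R (t - 1)) (hlt : nextReq σ T j < nextReq σ T i) :
    (H.insertEdge htime hj hi hlt).E = insert (i, j) H.E :=
  rfl

lemma time_insertEdge_le (htime : ∀ e ∈ H.E, H.time e < t) (hj : EvictsIdx R t j)
    (hi : i ∈ lastIdx R (t - 1)) (hlt : nextReq σ T j < nextReq σ T i) :
    ∀ e ∈ (H.insertEdge htime hj hi hlt).E, (H.insertEdge htime hj hi hlt).time e ≤ t := by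
  intro e he
  change Function.update H.time (i, j) t e ≤ t
  rcases eq_or_ne e (i, j) with rfl | hne
  · rw [Function.update_self]
  · rw [Function.update_of_ne hne]
    exact (htime e (Finset.mem_of_mem_insert_of_ne he hne)).le

lemma not_evictsIdx_snd (htime : ∀ e ∈ H.E, H.time e < t) {e : ℕ × ℕ} (he : e ∈ H.E) :
    ¬ EvictsIdx R t e.2 := fun h =>
  (htime e he).ne ((H.mistake e he).1.time_unique h)

lemma notMem_of_evictsIdx (htime : ∀ e ∈ H.E, H.time e < t) (hj : EvictsIdx R t j) (i : ℕ) :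
    (i, j) ∉ H.E := fun h =>
  not_evictsIdx_snd htime h hj

lemma exists_extend_coloring {col : ℕ × ℕ → ℕ} {n x : ℕ} (hcol : IsChainColoring R H.E col n)
    (htime : ∀ e ∈ H.E, H.time e < t) (hj : EvictsIdx R t j) (hx : (i, x) ∈ H.E)
    (hxt : nextReq σ T x = t) : ∃ col', IsChainColoring R (insert (i, j) H.E) col' n := by
  have htrig : TriggersIdx R x j := ⟨⟨_, (H.mistake _ hx).1⟩, hxt.symm ▸ hj⟩
  refine ⟨_, hcol.insert (notMem_of_evictsIdx htime hj i) (hcol.lt _ hx) le_rfl <|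
    (hcol.chain (col (i, x))).insert (Finset.mem_filter.2 ⟨hx, rfl⟩) htrig ?_ ?_⟩
  · rintro e he rfl
    exact not_evictsIdx_snd htime (Finset.mem_filter.1 he).1 hj
  · rintro e he ⟨-, hev⟩
    exact not_evictsIdx_snd htime (Finset.mem_filter.1 he).1 (hxt ▸ hev)

end EvictionGraph

end Graph

section Charging

variable {k T t n x j : ℕ} {σ : ℕ → S} {R A : CacheRun S k T σ} {H : EvictionGraph R}
  {col : ℕ × ℕ → ℕ} {μ : Equiv.Perm ℕ} {E : Finset (ℕ × ℕ)}

lemma IsMatching.lastIdx_succ (hμ : IsMatching (lastIdx A t) (lastIdx R t) μ)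
    (hR : Replaces R t j) (hA : Replaces A t x)
    (hfix : (μ * Equiv.swap x (μ.symm j)) (t + 1) = t + 1) :
    IsMatching (lastIdx A (t + 1)) (lastIdx R (t + 1)) (μ * Equiv.swap x (μ.symm j)) := by
  rw [hA.lastIdx_succ, hR.lastIdx_succ]
  exact (hμ.erase hA.mem hR.mem).insert hfix

lemma IsMatching.mul_swap_apply_eq (hμ : IsMatching (lastIdx A t) (lastIdx R t) μ)
    (hj : j ∈ lastIdx R t) (hx : x ∈ lastIdx A t) (hfix : ∀ i, t < i → μ i = i) {i : ℕ}
    (hi : t < i) : (μ * Equiv.swap x (μ.symm j)) i = i := by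
  have hxt := (mem_lastIdx.1 hx).2.1
  have hyt := (mem_lastIdx.1 (hμ.symm_mem hj)).2.1
  rw [Equiv.Perm.mul_apply, Equiv.swap_apply_of_ne_of_ne (by omega) (by omega), hfix i hi]

lemma Replaces.nextReq_lt_apply (hA : Replaces A t x) (ht : t < T)
    (hμ : IsMatching (lastIdx A t) (lastIdx R t) μ) (hhit : σ (t + 1) ∈ A.C t)
    (hmiss : σ (t + 1) ∉ R.C t) : nextReq σ T x < nextReq σ T (μ x) := by
  rw [hA.nextReq_eq hhit]
  exact succ_lt_nextReq_of_notMem ht ((hμ.apply_mem_iff x).2 hA.mem) hmiss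

lemma Replaces.apply_eq_of_hit (hA : Replaces A t x) (hR : Replaces R t j) (ht : t < T)
    (hμ : IsMatching (lastIdx A t) (lastIdx R t) μ) (hhitA : σ (t + 1) ∈ A.C t)
    (hhitR : σ (t + 1) ∈ R.C t) : μ x = j := by
  obtain rfl : x = j :=
    eq_of_nextReq_eq_succ ht hA.mem hR.mem (hA.nextReq_eq hhitA) (hR.nextReq_eq hhitR)
  exact hμ.apply_eq x hA.mem hR.mem

/-- The eviction of `j` at time `t + 1` is a mistake witnessed by `μ x`, and `j` is matched to
itself, so that no weight is freed by replacing `j`. -/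
structure IsChargedMistake (R : CacheRun S k T σ) (t x j : ℕ) (μ : Equiv.Perm ℕ) : Prop where
  miss : σ (t + 1) ∉ R.C t
  symm_apply_eq : μ.symm j = j
  nextReq_lt : nextReq σ T j < nextReq σ T (μ x)

lemma IsChargedMistake.mul_swap_apply (h : IsChargedMistake R t x j μ) :
    (μ * Equiv.swap x (μ.symm j)) j = μ x := by
  rw [h.symm_apply_eq, Equiv.Perm.mul_apply, Equiv.swap_apply_right]

lemma IsChargedMistake.mem_lastIdx_succ (h : IsChargedMistake R t x j μ)
    (hμ : IsMatching (lastIdx A t) (lastIdx R t) μ) (hR : Replaces R t j) (hA : Replaces A t x) :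
    j ∈ lastIdx A (t + 1) := by
  have hj : j ∈ lastIdx A t := h.symm_apply_eq ▸ hμ.symm_mem hR.mem
  have hne : j ≠ x := by
    rintro rfl
    exact h.nextReq_lt.ne (congrArg _ ((Equiv.symm_apply_eq μ).1 h.symm_apply_eq))
  rw [hA.lastIdx_succ]
  exact Finset.mem_insert_of_mem (Finset.mem_erase.2 ⟨hne, hj⟩)

lemma weight_le_add_one_of_not_isChargedMistake (hmiss : σ (t + 1) ∉ R.C t)
    (hnot : ¬ IsChargedMistake R t x j μ) :
    weight σ T E (μ.symm j) (μ x) ≤ weight σ T E (μ.symm j) j + 1 := by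
  by_cases hy : μ.symm j = j
  · have hle : nextReq σ T (μ x) ≤ nextReq σ T j := not_lt.1 fun hlt => hnot ⟨hmiss, hy, hlt⟩
    rw [hy, weight_self, zero_add]
    exact weight_le_one hle
  · have hone : 1 ≤ weight σ T E (μ.symm j) j := one_le_weight hy
    have htwo : weight σ T E (μ.symm j) (μ x) ≤ 2 := weight_le_two
    omega

lemma weight_rematch_le (hA : Replaces A t x) (hR : Replaces R t j) (ht : t < T)
    (hμ : IsMatching (lastIdx A t) (lastIdx R t) μ) (hnot : ¬ IsChargedMistake R t x j μ) :
    weight σ T E (μ.symm j) (μ x) ≤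
      weight σ T E x (μ x) + weight σ T E (μ.symm j) j +
        2 * if σ (t + 1) ∈ A.C t then 0 else 1 := by
  split_ifs with hhit
  · by_cases hhitR : σ (t + 1) ∈ R.C t
    · rw [hA.apply_eq_of_hit hR ht hμ hhit hhitR]
      omega
    · have hne : x ≠ μ x := fun h => (hA.nextReq_lt_apply ht hμ hhit hhitR).ne (congrArg _ h)
      have hone : 1 ≤ weight σ T E x (μ x) := one_le_weight hne
      have hle := weight_le_add_one_of_not_isChargedMistake (E := E) hhitR hnot
      omega
  · have htwo : weight σ T E (μ.symm j) (μ x) ≤ 2 := weight_le_two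
    omega

lemma miss_add_weight_rematch_le (hA : Replaces A t x) (hR : Replaces R t j) (ht : t < T)
    (hμ : IsMatching (lastIdx A t) (lastIdx R t) μ) (hnot : ¬ IsChargedMistake R t x j μ) :
    (if σ (t + 1) ∈ R.C t then 0 else 1) + weight σ T ∅ (μ.symm j) (μ x) ≤
      weight σ T ∅ x (μ x) + weight σ T ∅ (μ.symm j) j +
        2 * if σ (t + 1) ∈ A.C t then 0 else 1 := by
  by_cases hhitR : σ (t + 1) ∈ R.C t
  · rw [if_pos hhitR, zero_add]
    exact weight_rematch_le hA hR ht hμ hnot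
  · have hle := weight_le_add_one_of_not_isChargedMistake (E := ∅) hhitR hnot
    rw [if_neg hhitR]
    split_ifs with hhit
    · have htwo : weight σ T ∅ x (μ x) = 2 :=
        weight_eq_two (hA.nextReq_lt_apply ht hμ hhit hhitR) (Finset.notMem_empty _)
      omega
    · omega

/-- The state of the charging argument after time `t`: the eviction graph `H` of the mistakes paid
for so far, its coloring with `n` colors, and the matching `μ` of the two caches. -/
structure Charging (R A : CacheRun S k T σ) (t : ℕ) (H : EvictionGraph R) (col : ℕ × ℕ → ℕ) (n : ℕ)
    (μ : Equiv.Perm ℕ) : Prop where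
  matching : IsMatching (lastIdx A t) (lastIdx R t) μ
  apply_eq : ∀ i, t < i → μ i = i
  time_le : ∀ e ∈ H.E, H.time e ≤ t
  coloring : IsChainColoring R H.E col n
  misses_le : missesUpTo R t + totalWeight σ T ∅ (lastIdx A t) μ ≤ 2 * missesUpTo A t + H.E.card
  colors_le : n + totalWeight σ T H.E (lastIdx A t) μ ≤ 2 * missesUpTo A t

lemma Charging.zero (col : ℕ × ℕ → ℕ) :
    Charging R A 0 (EvictionGraph.empty R) col 0 1 where
  matching := lastIdx_congr (A.init.trans R.init.symm) ▸ IsMatching.one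
  apply_eq _ _ := rfl
  time_le e he := absurd he (Finset.notMem_empty e)
  coloring := IsChainColoring.empty
  misses_le := by
    rw [totalWeight_one]
    exact Nat.zero_le _
  colors_le := by
    rw [totalWeight_one]
    exact Nat.zero_le _

lemma Charging.succ_of_C_eq (h : Charging R A t H col n μ) (heq : R.C t = A.C t)
    (heq_succ : R.C (t + 1) = A.C (t + 1)) : Charging R A (t + 1) H col n 1 where
  matching := lastIdx_congr heq_succ ▸ IsMatching.one
  apply_eq _ _ := rfl
  time_le e he := (h.time_le e he).trans t.le_succ
  coloring := h.coloring
  misses_le := by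
    have hle := h.misses_le
    rw [totalWeight_one, missesUpTo_succ, missesUpTo_succ, heq]
    omega
  colors_le := by
    have hle := h.colors_le
    rw [totalWeight_one, missesUpTo_succ]
    omega

lemma Charging.totalWeight_succ (h : Charging R A t H col n μ) (hR : Replaces R t j)
    (hA : Replaces A t x) (E : Finset (ℕ × ℕ)) :
    totalWeight σ T E (lastIdx A (t + 1)) (μ * Equiv.swap x (μ.symm j)) +
        (weight σ T E x (μ x) + weight σ T E (μ.symm j) j) =
      totalWeight σ T E (lastIdx A t) μ + weight σ T E (μ.symm j) (μ x) := by
  rw [hA.lastIdx_succ]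
  exact totalWeight_insert_erase hA.mem (h.matching.symm_mem hR.mem)
    (h.matching.mul_swap_apply_eq hR.mem hA.mem h.apply_eq t.lt_succ_self)

lemma Charging.succ_of_not_isChargedMistake (h : Charging R A t H col n μ) (ht : t < T)
    (hR : Replaces R t j) (hA : Replaces A t x) (hnot : ¬ IsChargedMistake R t x j μ) :
    Charging R A (t + 1) H col n (μ * Equiv.swap x (μ.symm j)) where
  matching := h.matching.lastIdx_succ hR hA
    (h.matching.mul_swap_apply_eq hR.mem hA.mem h.apply_eq t.lt_succ_self)
  apply_eq _ hi := h.matching.mul_swap_apply_eq hR.mem hA.mem h.apply_eq (t.lt_succ_self.trans hi)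
  time_le e he := (h.time_le e he).trans t.le_succ
  coloring := h.coloring
  misses_le := by
    have hold := h.misses_le
    have hweight := h.totalWeight_succ hR hA ∅
    have hstep := miss_add_weight_rematch_le hA hR ht h.matching hnot
    rw [missesUpTo_succ, missesUpTo_succ]
    omega
  colors_le := by
    have hold := h.colors_le
    have hweight := h.totalWeight_succ hR hA H.E
    have hstep := weight_rematch_le (E := H.E) hA hR ht h.matching hnot
    rw [missesUpTo_succ]
    omega

lemma Charging.exists_coloring_insert (h : Charging R A t H col n μ) (ht : t < T)
    (hR : Replaces R t j) (hA : Replaces A t x) (hmiss : σ (t + 1) ∉ R.C t) :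
    ∃ col' n', IsChainColoring R (insert (μ x, j) H.E) col' n' ∧
      n' + 1 ≤ n + weight σ T H.E x (μ x) + 2 * if σ (t + 1) ∈ A.C t then 0 else 1 := by
  have htime : ∀ e ∈ H.E, H.time e < t + 1 := fun e he => Nat.lt_succ_of_le (h.time_le e he)
  have hev := hR.evicts hmiss
  have hnew := h.coloring.insert_newColor (EvictionGraph.notMem_of_evictsIdx htime hev (μ x))
  split_ifs with hhit
  · have hlt := hA.nextReq_lt_apply ht h.matching hhit hmiss
    by_cases hE : (μ x, x) ∈ H.E
    · have hone : 1 ≤ weight σ T H.E x (μ x) := one_le_weight fun heq => hlt.ne (congrArg _ heq)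
      obtain ⟨col', hcol'⟩ := EvictionGraph.exists_extend_coloring h.coloring htime hev hE
        (hA.nextReq_eq hhit)
      exact ⟨col', n, hcol', by omega⟩
    · exact ⟨_, n + 1, hnew, by rw [weight_eq_two hlt hE]⟩
  · exact ⟨_, n + 1, hnew, by omega⟩

lemma Charging.totalWeight_succ_of_isChargedMistake (h : Charging R A t H col n μ)
    (hR : Replaces R t j) (hA : Replaces A t x) (hmistake : IsChargedMistake R t x j μ)
    (hE : (μ x, j) ∉ E) :
    totalWeight σ T E (lastIdx A (t + 1)) (μ * Equiv.swap x (μ.symm j)) + weight σ T E x (μ x) =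
      totalWeight σ T E (lastIdx A t) μ + 2 := by
  have hweight := h.totalWeight_succ hR hA E
  have hzero : weight σ T E (μ.symm j) j = 0 := by rw [hmistake.symm_apply_eq, weight_self]
  have htwo : weight σ T E (μ.symm j) (μ x) = 2 := by
    rw [hmistake.symm_apply_eq, weight_eq_two hmistake.nextReq_lt hE]
  omega

lemma Charging.exists_succ_of_isChargedMistake (h : Charging R A t H col n μ) (ht : t < T)
    (hR : Replaces R t j) (hA : Replaces A t x) (hmistake : IsChargedMistake R t x j μ) :
    ∃ H' col' n', Charging R A (t + 1) H' col' n' (μ * Equiv.swap x (μ.symm j)) := by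
  have htime : ∀ e ∈ H.E, H.time e < t + 1 := fun e he => Nat.lt_succ_of_le (h.time_le e he)
  have hev := hR.evicts hmistake.miss
  have hnew := EvictionGraph.notMem_of_evictsIdx htime hev (μ x)
  have hμx : μ x ∈ lastIdx R t := (h.matching.apply_mem_iff x).2 hA.mem
  obtain ⟨col', n', hcol', hn'⟩ := h.exists_coloring_insert ht hR hA hmistake.miss
  have hfix : ∀ i, t < i → (μ * Equiv.swap x (μ.symm j)) i = i := fun _ =>
    h.matching.mul_swap_apply_eq hR.mem hA.mem h.apply_eq
  refine ⟨H.insertEdge htime hev hμx hmistake.nextReq_lt, col', n',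
    h.matching.lastIdx_succ hR hA (hfix _ t.lt_succ_self), fun i hi => hfix i (by omega),
    EvictionGraph.time_insertEdge_le htime hev hμx hmistake.nextReq_lt, hcol', ?_, ?_⟩
  · have hold := h.misses_le
    have hweight := h.totalWeight_succ_of_isChargedMistake hR hA hmistake (Finset.notMem_empty _)
    have hcard : (insert (μ x, j) H.E).card = H.E.card + 1 := Finset.card_insert_of_notMem hnew
    have hfreed : 2 ≤ weight σ T ∅ x (μ x) + 2 * if σ (t + 1) ∈ A.C t then 0 else 1 := by
      split_ifs with hhit
      · have hlt := hA.nextReq_lt_apply ht h.matching hhit hmistake.miss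
        rw [weight_eq_two hlt (Finset.notMem_empty _)]
      · omega
    rw [missesUpTo_succ, missesUpTo_succ, if_neg hmistake.miss, EvictionGraph.insertEdge_E, hcard]
    omega
  · have hold := h.colors_le
    have hweight := h.totalWeight_succ_of_isChargedMistake hR hA hmistake hnew
    have hedge := totalWeight_insert_edge (E := H.E)
      (hmistake.mem_lastIdx_succ h.matching hR hA)
      (hmistake.mul_swap_apply.symm ▸ hmistake.nextReq_lt) (hmistake.mul_swap_apply.symm ▸ hnew)
    rw [hmistake.mul_swap_apply] at hedge
    rw [missesUpTo_succ, EvictionGraph.insertEdge_E]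
    omega

lemma exists_charging (R A : CacheRun S k T σ) (ht : t ≤ T) :
    ∃ H col n μ, Charging R A t H col n μ := by
  induction t with
  | zero => exact ⟨_, 0, _, _, Charging.zero 0⟩
  | succ t ih =>
    obtain ⟨H, col, n, μ, h⟩ := ih (by omega)
    rcases C_eq_or_replaces R A ht with ⟨heq, heq_succ⟩ | ⟨⟨j, hR⟩, x, hA⟩
    · exact ⟨_, _, _, _, h.succ_of_C_eq heq heq_succ⟩
    by_cases hmistake : IsChargedMistake R t x j μ
    · obtain ⟨H', col', n', h'⟩ := h.exists_succ_of_isChargedMistake ht hR hA hmistake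
      exact ⟨_, _, _, _, h'⟩
    · exact ⟨_, _, _, _, h.succ_of_not_isChargedMistake ht hR hA hmistake⟩

end Charging

theorem stmt10_general {k T : ℕ} {σ : ℕ → S} (R A : CacheRun S k T σ) :
    ∃ (H : EvictionGraph R) (col : ℕ × ℕ → ℕ) (n : ℕ), IsChainColoring R H.E col n ∧
      n ≤ 2 * misses A ∧ misses R ≤ 2 * misses A + H.E.card := by
  obtain ⟨H, col, n, μ, h⟩ := exists_charging R A le_rfl
  exact ⟨H, col, n, h.coloring, (Nat.le_add_right _ _).trans h.colors_le,
    (Nat.le_add_right _ _).trans h.misses_le⟩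

/-- For any run of a feasible eviction strategy there is an eviction
graph with an edge coloring such that same-colored edges share their source, the targets
of the edges of each color (in order) form a chain, at most `3·OPT` colors are used, and
`OBJ_Q ≤ 2·OPT + |E|`. -/
theorem stmt10 {S : Type} [DecidableEq S] (k T : ℕ) (hk : 1 ≤ k) (σ : ℕ → S)
    (R A : CacheRun S k T σ) (hA : IsBelady A) :
    ∃ (H : EvictionGraph R) (col : ℕ × ℕ → ℕ) (n : ℕ),
      (∀ e ∈ H.E, col e < n) ∧
      (∀ e ∈ H.E, ∀ e' ∈ H.E, col e = col e' → e.1 = e'.1) ∧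
      (∀ c : ℕ, ∃ (d : ℕ) (a : ℕ) (b : ℕ → ℕ),
        (H.E.filter fun e => col e = c) = (Finset.range d).image (fun x => (a, b x)) ∧
        (∀ x < d, ∀ x' < d, b x = b x' → x = x') ∧
        (∀ x, x + 1 < d → TriggersIdx R (b x) (b (x + 1)))) ∧
      n ≤ 3 * misses A ∧
      misses R ≤ 2 * misses A + H.E.card := by
  obtain ⟨H, col, n, hcol, hn, hmiss⟩ := stmt10_general R A
  exact ⟨H, col, n, hcol.lt, hcol.fst_eq, hcol.chain, by omega, hmiss⟩

end Caching
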